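/- arXiv:1507.04999 — 2 statements merged into one kernel-verified Lean document; each statement's English description precedes it below -/
import Mathlib

section
/- Assume n ≥ 2 and let λ ∈ K. If m_0, m_1, …, m_n ∈ D satisfy x_i∘m_j − x_j∘m_i ∈ D(E−λ) for all i, j ∈ {0,…,n}, then there exists m′ ∈ D such that m_i − x_i∘m′ ∈ D(E−λ) for every i. (This is the vanishing of the first Koszul cohomology group Ext^1_A(A/A_{≥1}, D/D(E−λ)).) -/
/-!
Context: `K` is a field of characteristic zero, `n ≥ 0`, and `d 0, …, d n` are
positive integers.  `A = K[x_0, …, x_n]` is the polynomial ring, graded with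
`x i` of weighted degree `d i`.  Inside `End_K(A)` we have the multiplication
operators `x i`, the partial derivatives `∂ i`, the Weyl algebra `D` generated
by them, and the Euler field `E = Σ_i d_i x_i ∂_i`.
-/

open MvPolynomial Finset

set_option linter.unusedSectionVars false
set_option synthInstance.maxHeartbeats 1000000
set_option maxHeartbeats 2000000

noncomputable section

variable (K : Type) [Field K] [CharZero K] (n : ℕ)

/-- The polynomial ring `A = K[x_0, …, x_n]`. -/
abbrev Amb := MvPolynomial (Fin (n+1)) K

/-- The operator of multiplication by `x_i` on `A`. -/
def xOp (i : Fin (n+1)) : Module.End K (Amb K n) := LinearMap.mulLeft K (X i)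

/-- The partial derivative `∂/∂x_i` on `A`. -/
def dOp (i : Fin (n+1)) : Module.End K (Amb K n) := (pderiv i).toLinearMap

/-- The Weyl algebra `D`: the `K`-subalgebra of `End_K(A)` generated by
`x_0, …, x_n, ∂_0, …, ∂_n`. -/
def Weyl : Subalgebra K (Module.End K (Amb K n)) :=
  Algebra.adjoin K (Set.range (xOp K n) ∪ Set.range (dOp K n))

variable (d : Fin (n+1) → ℕ)

/-- The Euler field `E = Σ_i d_i x_i ∂_i`, as an endomorphism of `A`. -/
def euler : Module.End K (Amb K n) := ∑ i, (d i : K) • (xOp K n i * dOp K n i)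

lemma xOp_mem (i : Fin (n+1)) : xOp K n i ∈ Weyl K n :=
  Algebra.subset_adjoin (Or.inl ⟨i, rfl⟩)

lemma dOp_mem (i : Fin (n+1)) : dOp K n i ∈ Weyl K n :=
  Algebra.subset_adjoin (Or.inr ⟨i, rfl⟩)

lemma euler_mem : euler K n d ∈ Weyl K n :=
  Subalgebra.sum_mem _ fun i _ => Subalgebra.smul_mem _
    (Subalgebra.mul_mem _ (xOp_mem K n i) (dOp_mem K n i)) _

/-- `x_i` as an element of the Weyl algebra. -/
def xElt (i : Fin (n+1)) : Weyl K n := ⟨xOp K n i, xOp_mem K n i⟩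

/-- `∂_i` as an element of the Weyl algebra. -/
def dElt (i : Fin (n+1)) : Weyl K n := ⟨dOp K n i, dOp_mem K n i⟩

/-- The Euler field as an element of the Weyl algebra. -/
def eulerElt : Weyl K n := ⟨euler K n d, euler_mem K n d⟩

/-- Multiplying by `x_i` on the left is scaling by `X i`. -/
lemma xOp_mul (i : Fin (n+1)) (T : Module.End K (Amb K n)) :
    xOp K n i * T = (X i : Amb K n) • T := by
  refine LinearMap.ext fun f => ?_
  simp [xOp]

lemma dOp_apply (i : Fin (n+1)) (f : Amb K n) : dOp K n i f = pderiv i f := rfl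

/-- The operator `∂^α`, described by its values on monomials. -/
def dPow (α : Fin (n+1) →₀ ℕ) : Module.End K (Amb K n) :=
  (basisMonomials (Fin (n+1)) K).constr K fun β =>
    monomial (β - α) (∏ i, ((β i).descFactorial (α i) : K))

lemma dPow_monomial (α β : Fin (n+1) →₀ ℕ) :
    dPow K n α (monomial β 1) = monomial (β - α) (∏ i, ((β i).descFactorial (α i) : K)) := by
  have h := (basisMonomials (Fin (n+1)) K).constr_basis K (fun β =>
    (monomial (β - α) (∏ i, ((β i).descFactorial (α i) : K)) : Amb K n)) β
  rwa [coe_basisMonomials] at h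

variable {K n} in
lemma end_ext_monomial {S T : Module.End K (Amb K n)}
    (h : ∀ β, S (monomial β 1) = T (monomial β 1)) : S = T :=
  (basisMonomials (Fin (n+1)) K).ext fun β => by simpa using h β

lemma dPow_zero : dPow K n 0 = 1 :=
  end_ext_monomial fun β => by simp [dPow_monomial]

lemma dOp_mul_dPow (i : Fin (n+1)) (α : Fin (n+1) →₀ ℕ) :
    dOp K n i * dPow K n α = dPow K n (α + Finsupp.single i 1) := by
  refine end_ext_monomial fun β => ?_
  rw [Module.End.mul_apply, dPow_monomial, dPow_monomial, dOp_apply,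
    pderiv_monomial, tsub_add_eq_tsub_tsub]
  congr 1
  rw [← Finset.mul_prod_erase univ _ (mem_univ i),
    ← Finset.mul_prod_erase univ (fun j => ((β j).descFactorial _ : K)) (mem_univ i)]
  have h : ∏ j ∈ univ.erase i,
        ((β j).descFactorial ((α + Finsupp.single i 1 : Fin (n+1) →₀ ℕ) j) : K) =
      ∏ j ∈ univ.erase i, ((β j).descFactorial (α j) : K) := by
    refine Finset.prod_congr rfl fun j hj => ?_
    simp [Finsupp.single_eq_of_ne (Finset.ne_of_mem_erase hj)]
  rw [h]
  simp [Nat.descFactorial_succ]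
  ring

/-- Applied to `x^α`, the operator `∂^β` vanishes unless `β ≤ α`. -/
lemma dPow_monomial_of_not_le {α β : Fin (n+1) →₀ ℕ} (h : ¬ β ≤ α) :
    dPow K n β (monomial α 1) = 0 := by
  obtain ⟨i, hi⟩ : ∃ i, α i < β i := by simpa [Finsupp.le_def] using h
  rw [dPow_monomial, Finset.prod_eq_zero (mem_univ i), monomial_zero]
  simpa using Nat.descFactorial_eq_zero_iff_lt.2 hi

/-- The operator `∑ a_α ∂^α` attached to a family of coefficients. -/
def normalForm : ((Fin (n+1) →₀ ℕ) →₀ Amb K n) →ₗ[Amb K n] Module.End K (Amb K n) :=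
  Finsupp.linearCombination (Amb K n) (dPow K n)

lemma normalForm_single (α : Fin (n+1) →₀ ℕ) (a : Amb K n) :
    normalForm K n (Finsupp.single α a) = a • dPow K n α := by
  simp [normalForm]

lemma normalForm_injective : Function.Injective (normalForm K n) := by
  rw [injective_iff_map_eq_zero]
  intro c hc
  by_contra hne
  obtain ⟨α, hα, hmin⟩ := c.support.exists_min_image Finsupp.degree
    (Finsupp.support_nonempty_iff.2 hne)
  have h0 : normalForm K n c (monomial α 1) = 0 := by rw [hc]; rfl
  rw [normalForm, Finsupp.linearCombination_apply, Finsupp.sum, LinearMap.sum_apply,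
    Finset.sum_eq_single α] at h0
  · rw [LinearMap.smul_apply, dPow_monomial, smul_eq_mul, mul_eq_zero] at h0
    refine h0.elim (Finsupp.mem_support_iff.1 hα) fun h => ?_
    rw [monomial_eq_zero, Finset.prod_eq_zero_iff] at h
    obtain ⟨i, -, hi⟩ := h
    simp at hi
  · intro β hβ hβα
    rw [LinearMap.smul_apply, dPow_monomial_of_not_le, smul_zero]
    intro hle
    refine hβα ?_
    have hdeg := hmin β hβ
    obtain ⟨γ, rfl⟩ := exists_add_of_le hle
    have : γ.degree = 0 := by
      rw [map_add] at hdeg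
      omega
    rw [(Finsupp.degree_eq_zero_iff γ).1 this, add_zero]
  · exact fun h => absurd hα h

lemma smul_mem_weyl (a : Amb K n) {T : Module.End K (Amb K n)} (hT : T ∈ Weyl K n) :
    a • T ∈ Weyl K n := by
  induction a using MvPolynomial.induction_on generalizing T with
  | C r =>
    have : (C r : Amb K n) • T = r • T := by
      refine LinearMap.ext fun f => ?_
      simp [C_mul']
    rw [this]
    exact Subalgebra.smul_mem _ hT r
  | add p q hp hq => rw [add_smul]; exact add_mem (hp hT) (hq hT)
  | mul_X p i hp =>
    rw [mul_smul, ← xOp_mul]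
    exact hp (mul_mem (xOp_mem K n i) hT)

lemma dPow_mem (α : Fin (n+1) →₀ ℕ) : dPow K n α ∈ Weyl K n := by
  induction α using Finsupp.induction with
  | zero => rw [dPow_zero]; exact one_mem _
  | single_add i k α _ _ hα =>
    clear * - hα
    induction k with
    | zero => simpa using hα
    | succ k ih =>
      rw [Finsupp.single_add, add_right_comm, ← dOp_mul_dPow]
      exact mul_mem (dOp_mem K n i) ih

lemma normalForm_mem (c : (Fin (n+1) →₀ ℕ) →₀ Amb K n) : normalForm K n c ∈ Weyl K n := by
  rw [normalForm, Finsupp.linearCombination_apply]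
  exact sum_mem fun α _ => smul_mem_weyl K n _ (dPow_mem K n α)

lemma dOp_mul_smul (i : Fin (n+1)) (a : Amb K n) (T : Module.End K (Amb K n)) :
    dOp K n i * (a • T) = a • (dOp K n i * T) + pderiv i a • T := by
  refine LinearMap.ext fun f => ?_
  simp [dOp_apply, Derivation.leibniz, mul_comm]

variable {K n} in
/-- Every element of the Weyl algebra has a normal form `∑ a_α ∂^α`. -/
lemma exists_normalForm {T : Module.End K (Amb K n)} (hT : T ∈ Weyl K n) :
    ∃ c, normalForm K n c = T := by
  suffices h : ∀ c, T * normalForm K n c ∈ LinearMap.range (normalForm K n) by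
    simpa [normalForm_single, dPow_zero] using h (Finsupp.single 0 1)
  induction hT using Algebra.adjoin_induction with
  | mem S hS =>
    intro c
    obtain ⟨i, rfl⟩ | ⟨i, rfl⟩ := hS
    · rw [xOp_mul]
      exact Submodule.smul_mem _ _ ⟨c, rfl⟩
    · induction c using Finsupp.induction_linear with
      | zero => simp
      | add c c' hc hc' => rw [map_add, mul_add]; exact add_mem hc hc'
      | single α a =>
        rw [normalForm_single, dOp_mul_smul, dOp_mul_dPow, ← normalForm_single,
          ← normalForm_single]
        exact add_mem ⟨_, rfl⟩ ⟨_, rfl⟩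
  | algebraMap r =>
    intro c
    refine ⟨(C r : Amb K n) • c, ?_⟩
    rw [map_smul]
    refine LinearMap.ext fun f => ?_
    simp [C_mul', Module.algebraMap_end_apply]
  | add S T _ _ hS hT =>
    intro c
    rw [add_mul]
    exact add_mem (hS c) (hT c)
  | mul S T _ _ hS hT =>
    intro c
    obtain ⟨b, hb⟩ := hT c
    rw [mul_assoc, ← hb]
    exact hS b

/-- The commutator with `x_i` on `End_K(A)`. -/
def adX (i : Fin (n+1)) : Module.End K (Module.End K (Amb K n)) :=
  LinearMap.mulLeft K (xOp K n i) - LinearMap.mulRight K (xOp K n i)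

lemma adX_apply (i : Fin (n+1)) (T : Module.End K (Amb K n)) :
    adX K n i T = xOp K n i * T - T * xOp K n i := rfl

lemma adX_xOp_mul (i j : Fin (n+1)) (T : Module.End K (Amb K n)) :
    adX K n i (xOp K n j * T) = xOp K n j * adX K n i T := by
  have h : xOp K n i * xOp K n j = xOp K n j * xOp K n i := by
    refine LinearMap.ext fun f => ?_
    simp only [xOp, Module.End.mul_apply, LinearMap.mulLeft_apply]
    ring
  rw [adX_apply, adX_apply, mul_sub, ← mul_assoc, h, mul_assoc, mul_assoc]

lemma adX_dOp_mul (i j : Fin (n+1)) (T : Module.End K (Amb K n)) :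
    adX K n i (dOp K n j * T) =
      dOp K n j * adX K n i T - (Pi.single (M := fun _ => K) i 1 j) • T := by
  have h := dOp_mul_smul K n j (X i) T
  rw [← xOp_mul, ← xOp_mul, pderiv_X] at h
  have h' : (Pi.single (M := fun _ => Amb K n) j 1 i) • T =
      (Pi.single (M := fun _ => K) i 1 j) • T := by
    rcases eq_or_ne i j with rfl | hij
    · simp
    · simp [hij, hij.symm]
  rw [h'] at h
  rw [adX_apply, adX_apply, mul_sub, h, mul_assoc]
  abel

lemma adX_pow_dOp_mul (i j : Fin (n+1)) (k : ℕ) (T : Module.End K (Amb K n)) :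
    ∃ r : K, (adX K n i ^ (k + 1)) (dOp K n j * T) =
      dOp K n j * (adX K n i ^ (k + 1)) T - r • (adX K n i ^ k) T := by
  induction k with
  | zero => exact ⟨_, by simpa using adX_dOp_mul K n i j T⟩
  | succ k ih =>
    obtain ⟨r, hr⟩ := ih
    refine ⟨Pi.single (M := fun _ => K) i 1 j + r, ?_⟩
    rw [pow_succ', Module.End.mul_apply, hr, map_sub, adX_dOp_mul, map_smul,
      ← Module.End.mul_apply, ← Module.End.mul_apply, ← pow_succ', ← pow_succ', add_smul]
    abel

variable {K n} in
/-- The commutator with `x_i` is locally nilpotent on the Weyl algebra. -/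
lemma exists_adX_pow_eq_zero (i : Fin (n+1)) {T : Module.End K (Amb K n)} (hT : T ∈ Weyl K n) :
    ∃ k, (adX K n i ^ k) T = 0 := by
  suffices h : ∀ S, (∃ k, (adX K n i ^ k) S = 0) → ∃ k, (adX K n i ^ k) (T * S) = 0 by
    simpa using h 1 ⟨1, by simp [adX_apply]⟩
  induction hT using Algebra.adjoin_induction with
  | mem R hR =>
    rintro S ⟨k, hk⟩
    obtain ⟨j, rfl⟩ | ⟨j, rfl⟩ := hR
    · refine ⟨k, ?_⟩
      have (k : ℕ) : (adX K n i ^ k) (xOp K n j * S) = xOp K n j * (adX K n i ^ k) S := by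
        induction k with
        | zero => simp
        | succ k ih => rw [pow_succ', Module.End.mul_apply, ih, adX_xOp_mul, Module.End.mul_apply]
      rw [this, hk, mul_zero]
    · obtain ⟨r, hr⟩ := adX_pow_dOp_mul K n i j k S
      refine ⟨k + 1, ?_⟩
      rw [hr, hk, pow_succ', Module.End.mul_apply, hk]
      simp
  | algebraMap r =>
    rintro S ⟨k, hk⟩
    exact ⟨k, by rw [Algebra.algebraMap_eq_smul_one, smul_one_mul, map_smul, hk, smul_zero]⟩
  | add R T _ _ hR hT =>
    intro S hS
    obtain ⟨k, hk⟩ := hR S hS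
    obtain ⟨l, hl⟩ := hT S hS
    refine ⟨k + l, ?_⟩
    rw [add_mul, map_add, pow_add, Module.End.mul_apply _ _ (T * S), hl, (Commute.pow_pow_self
      (adX K n i) k l).eq, Module.End.mul_apply, hk, map_zero, map_zero, add_zero]
  | mul R T _ _ hR hT =>
    intro S hS
    rw [mul_assoc]
    exact hR _ (hT S hS)

variable {K n} in
lemma eq_zero_of_mul_xOp_eq_zero {i : Fin (n+1)} {T : Module.End K (Amb K n)}
    (hT : T ∈ Weyl K n) (h : T * xOp K n i = 0) : T = 0 := by
  obtain ⟨k, hk⟩ := exists_adX_pow_eq_zero i hT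
  have hpow (k : ℕ) : (adX K n i ^ k) T = xOp K n i ^ k * T := by
    induction k with
    | zero => simp
    | succ k ih =>
      rw [pow_succ', Module.End.mul_apply, ih, adX_apply, mul_assoc _ T, h, mul_zero, sub_zero,
        ← mul_assoc, pow_succ']
  rw [hpow] at hk
  clear hpow
  induction k with
  | zero => simpa using hk
  | succ k ih =>
    refine ih ?_
    rw [pow_succ', mul_assoc, xOp_mul] at hk
    refine LinearMap.ext fun f => ?_
    have := LinearMap.congr_fun hk f
    rw [LinearMap.smul_apply, smul_eq_mul, LinearMap.zero_apply, mul_eq_zero] at this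
    exact this.resolve_left (X_ne_zero i)

variable {K n} in
lemma eq_zero_of_mul_xOp_pow_eq_zero {i : Fin (n+1)} {T : Module.End K (Amb K n)}
    (hT : T ∈ Weyl K n) {N : ℕ} (h : T * xOp K n i ^ N = 0) : T = 0 := by
  induction N with
  | zero => simpa using h
  | succ N ih =>
    rw [pow_succ, ← mul_assoc] at h
    exact ih (eq_zero_of_mul_xOp_eq_zero
      (mul_mem hT (pow_mem (xOp_mem K n i) N)) h)

lemma euler_monomial (β : Fin (n+1) →₀ ℕ) :
    euler K n d (monomial β 1) = ((∑ i, d i * β i : ℕ) : K) • monomial β (1 : K) := by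
  rw [euler, LinearMap.sum_apply, Nat.cast_sum, Finset.sum_smul]
  refine Finset.sum_congr rfl fun i _ => ?_
  rw [LinearMap.smul_apply, Module.End.mul_apply, dOp_apply, xOp,
    LinearMap.mulLeft_apply, X_mul_pderiv_monomial, Nat.cast_mul,
    mul_smul, Nat.cast_smul_eq_nsmul K (β i)]

variable {K n d} in
/-- Right multiplication by `E - t` is injective on the Weyl algebra. -/
lemma eq_zero_of_mul_euler_sub_eq_zero (hd : ∀ i, 0 < d i) (t : K)
    {T : Module.End K (Amb K n)} (hT : T ∈ Weyl K n) (h : T * (euler K n d - t • 1) = 0) :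
    T = 0 := by
  obtain ⟨N, hN⟩ : ∃ N : ℕ, ∀ k : ℕ, N ≤ k → (k : K) - t ≠ 0 := by
    by_cases ht : ∃ s : ℕ, (s : K) = t
    · obtain ⟨s, rfl⟩ := ht
      refine ⟨s + 1, fun k hk hks => ?_⟩
      have : k = s := by exact_mod_cast sub_eq_zero.1 hks
      omega
    · exact ⟨0, fun k _ hk => ht ⟨k, sub_eq_zero.1 hk⟩⟩
  refine eq_zero_of_mul_xOp_pow_eq_zero (i := 0) (N := N) hT (end_ext_monomial fun β => ?_)
  have hx : (xOp K n 0 ^ N) (monomial β 1) = monomial (Finsupp.single 0 N + β) (1 : K) := by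
    rw [xOp, LinearMap.pow_mulLeft, LinearMap.mulLeft_apply, X_pow_eq_monomial, monomial_mul,
      one_mul]
  set γ := Finsupp.single 0 N + β with hγ
  have hle : N ≤ ∑ i, d i * γ i := by
    calc N ≤ d 0 * γ 0 := by
          rw [hγ, Finsupp.add_apply, Finsupp.single_eq_same]
          nlinarith [hd 0]
      _ ≤ _ := Finset.single_le_sum (f := fun i => d i * γ i) (fun _ _ => Nat.zero_le _)
          (mem_univ 0)
  have hT0 := LinearMap.congr_fun h (monomial γ 1)
  rw [Module.End.mul_apply, LinearMap.sub_apply, euler_monomial, LinearMap.smul_apply,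
    Module.End.one_apply, ← sub_smul, map_smul, LinearMap.zero_apply, smul_eq_zero] at hT0
  rw [Module.End.mul_apply, hx, hT0.resolve_left (hN _ hle), LinearMap.zero_apply]

section Koszul

variable {R M ι : Type*} [CommRing R] [AddCommGroup M] [Module R M] {x : ι → R} {i₀ i₁ i₂ : ι}

/-- Exactness of the Koszul complex in degree one, for a family containing a weakly regular
sequence of length two. -/
lemma koszul_exact_one (h₀ : ∀ f : M, x i₀ • f = 0 → f = 0)
    (h₁ : ∀ f g : M, x i₁ • f = x i₀ • g → ∃ h, f = x i₀ • h)
    (m : ι → M) (hm : ∀ i j, x i • m j = x j • m i) : ∃ m', ∀ i, m i = x i • m' := by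
  obtain ⟨m', hm'⟩ := h₁ _ _ (hm i₁ i₀)
  refine ⟨m', fun j => sub_eq_zero.1 (h₀ _ ?_)⟩
  rw [smul_sub, hm, hm', smul_comm, sub_self]

/-- Exactness of the Koszul complex in degree two, for a family containing a weakly regular
sequence of length three. -/
lemma koszul_exact_two (h₀ : ∀ f : M, x i₀ • f = 0 → f = 0)
    (h₁ : ∀ f g : M, x i₁ • f = x i₀ • g → ∃ h, f = x i₀ • h)
    (h₂ : ∀ f g h : M, x i₂ • f = x i₀ • g + x i₁ • h → ∃ g' h', f = x i₀ • g' + x i₁ • h')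
    (w : ι → ι → M) (hw : ∀ i j, x i₀ • w i j = x i • w i₀ j - x j • w i₀ i) :
    ∃ u : ι → M, ∀ i j, w i j = x i • u j - x j • u i := by
  obtain ⟨r, v, hrv⟩ := h₂ (w i₀ i₁) (-w i₁ i₂) (w i₀ i₂) (by
    rw [smul_neg, hw]
    abel)
  have hu (j : ι) : ∃ u, w i₀ j - x j • v = x i₀ • u := by
    refine h₁ _ (w i₁ j + x j • r) ?_
    rw [smul_add, hw, hrv]
    module
  choose u hu using hu
  refine ⟨u, fun i j => sub_eq_zero.1 (h₀ _ ?_)⟩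
  have hi := hu i
  have hj := hu j
  rw [sub_eq_iff_eq_add] at hi hj
  rw [smul_sub, hw, hi, hj]
  module

end Koszul

section Regular

variable {σ τ F : Type*} [Field F] {i j k : σ}

lemma finsupp_X_smul_eq_zero (f : τ →₀ MvPolynomial σ F)
    (h : (X i : MvPolynomial σ F) • f = 0) : f = 0 := by
  ext1 a
  have := DFunLike.congr_fun h a
  simpa using this

lemma finsupp_exists_eq_X_smul (hij : i ≠ j) (f g : τ →₀ MvPolynomial σ F)
    (h : (X j : MvPolynomial σ F) • f = (X i : MvPolynomial σ F) • g) :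
    ∃ f', f = (X i : MvPolynomial σ F) • f' := by
  have hdvd (a : τ) : ∃ p, f a = X i * p := by
    have ha := DFunLike.congr_fun h a
    simp only [Finsupp.smul_apply, smul_eq_mul] at ha
    refine ((X_prime (R := F) (i := i)).dvd_or_dvd ⟨_, ha⟩).resolve_left fun hX => hij ?_
    exact X_dvd_X.1 hX
  choose p hp using hdvd
  refine ⟨Finsupp.onFinset f.support p fun a ha => ?_, ?_⟩
  · rw [Finsupp.mem_support_iff, hp]
    exact mul_ne_zero (X_ne_zero i) ha
  · ext1 a
    simpa using hp a

lemma mem_span_X_pair_of_X_mul_mem (hik : i ≠ k) (hjk : j ≠ k) {p : MvPolynomial σ F}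
    (h : X k * p ∈ Ideal.span {X i, X j}) : p ∈ Ideal.span {X i, X j} := by
  rw [← Set.image_pair, mem_ideal_span_X_image] at h ⊢
  intro m hm
  obtain ⟨l, hl, hne⟩ := h (Finsupp.single k 1 + m) (by
    rw [mem_support_iff, coeff_X_mul]
    exact mem_support_iff.1 hm)
  refine ⟨l, hl, ?_⟩
  have hlk : l ≠ k := by rcases hl with rfl | rfl <;> assumption
  simpa [Finsupp.single_eq_of_ne hlk] using hne

lemma finsupp_exists_eq_X_smul_add (hik : i ≠ k) (hjk : j ≠ k)
    (f g h : τ →₀ MvPolynomial σ F)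
    (hf : (X k : MvPolynomial σ F) • f = (X i : MvPolynomial σ F) • g +
      (X j : MvPolynomial σ F) • h) :
    ∃ g' h', f = (X i : MvPolynomial σ F) • g' + (X j : MvPolynomial σ F) • h' := by
  have hex (a : τ) : ∃ p : MvPolynomial σ F × MvPolynomial σ F,
      f a = X i * p.1 + X j * p.2 ∧ (f a = 0 → p = 0) := by
    by_cases h0 : f a = 0
    · exact ⟨0, by simp [h0]⟩
    have ha := DFunLike.congr_fun hf a
    simp only [Finsupp.smul_apply, Finsupp.add_apply, smul_eq_mul] at ha
    obtain ⟨p, q, hpq⟩ := Ideal.mem_span_pair.1 (mem_span_X_pair_of_X_mul_mem hik hjk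
      (Ideal.mem_span_pair.2 ⟨g a, h a, by rw [ha]; ring⟩))
    exact ⟨(p, q), by rw [← hpq]; ring, fun h => absurd h h0⟩
  choose p hp hp0 using hex
  refine ⟨Finsupp.onFinset f.support (fun a => (p a).1) fun a ha => ?_,
    Finsupp.onFinset f.support (fun a => (p a).2) fun a ha => ?_, ?_⟩
  · exact Finsupp.mem_support_iff.2 fun h0 => ha (by rw [hp0 a h0]; rfl)
  · exact Finsupp.mem_support_iff.2 fun h0 => ha (by rw [hp0 a h0]; rfl)
  · ext1 a
    simpa using hp a

end Regular

/-- Assume `n ≥ 2` and let `λ ∈ K`.  If `m_0, …, m_n ∈ D` satisfy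
`x_i∘m_j − x_j∘m_i ∈ D(E−λ)` for all `i, j`, then there is `m' ∈ D` with
`m_i − x_i∘m' ∈ D(E−λ)` for every `i`.  (Vanishing of `Ext¹_A(A/A_{≥1}, D/D(E−λ))`.) -/
theorem stmt8 (hn : 2 ≤ n) (hd : ∀ i, 0 < d i) (t : K) (m : Fin (n+1) → Weyl K n)
    (h : ∀ i j : Fin (n+1), ∃ w : Weyl K n,
        xElt K n i * m j - xElt K n j * m i = w * (eulerElt K n d - t • 1)) :
    ∃ m' : Weyl K n, ∀ i : Fin (n+1), ∃ w : Weyl K n,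
      m i - xElt K n i * m' = w * (eulerElt K n d - t • 1) := by
  set P : Module.End K (Amb K n) := euler K n d - t • 1 with hP
  have hPmem : P ∈ Weyl K n :=
    sub_mem (euler_mem K n d) (Subalgebra.smul_mem _ (one_mem _) t)
  choose w hw using h
  choose ω hω using fun i j => exists_normalForm (w i j).2
  have hw' (i j : Fin (n+1)) : (X i : Amb K n) • (m j : Module.End K (Amb K n)) -
      (X j : Amb K n) • (m i : Module.End K (Amb K n)) = normalForm K n (ω i j) * P := by
    rw [hω, ← xOp_mul, ← xOp_mul]
    exact congrArg Subtype.val (hw i j)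
  obtain ⟨i₁, i₂, h01, h02, h12⟩ : ∃ i₁ i₂ : Fin (n+1), 0 ≠ i₁ ∧ 0 ≠ i₂ ∧ i₁ ≠ i₂ :=
    ⟨⟨1, by omega⟩, ⟨2, by omega⟩, by simp [Fin.ext_iff], by simp [Fin.ext_iff],
      by simp [Fin.ext_iff]⟩
  have hω' (i j : Fin (n+1)) : (X 0 : Amb K n) • ω i j = (X i : Amb K n) • ω 0 j -
      (X j : Amb K n) • ω 0 i := by
    refine normalForm_injective K n (sub_eq_zero.1
      (eq_zero_of_mul_euler_sub_eq_zero hd t ?_ ?_))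
    · exact sub_mem (normalForm_mem K n _) (normalForm_mem K n _)
    · rw [map_sub, map_smul, map_smul, map_smul, ← hP, sub_mul, sub_mul, smul_mul_assoc,
        smul_mul_assoc, smul_mul_assoc, ← hw', ← hw', ← hw']
      module
  obtain ⟨u, hu⟩ := koszul_exact_two (x := fun i => (X i : Amb K n)) (i₀ := 0) (i₁ := i₁)
    (i₂ := i₂) finsupp_X_smul_eq_zero (finsupp_exists_eq_X_smul h01)
    (finsupp_exists_eq_X_smul_add h02 h12) ω hω'
  choose c hc using fun i => exists_normalForm
    (sub_mem (m i).2 (mul_mem (normalForm_mem K n (u i)) hPmem))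
  obtain ⟨c', hc'⟩ := koszul_exact_one (x := fun i => (X i : Amb K n)) (i₀ := 0) (i₁ := i₁)
    finsupp_X_smul_eq_zero (finsupp_exists_eq_X_smul h01) c fun i j => by
      refine normalForm_injective K n (sub_eq_zero.1 ?_)
      have h := hw' i j
      rw [hu, map_sub, map_smul, map_smul, sub_mul, smul_mul_assoc, smul_mul_assoc] at h
      rw [map_smul, map_smul, hc, hc, smul_sub, smul_sub, sub_sub_sub_comm, h, sub_self]
  refine ⟨⟨normalForm K n c', normalForm_mem K n c'⟩, fun i =>
    ⟨⟨normalForm K n (u i), normalForm_mem K n (u i)⟩, Subtype.ext ?_⟩⟩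
  change (m i : Module.End K (Amb K n)) - xOp K n i * normalForm K n c' =
    normalForm K n (u i) * P
  rw [xOp_mul, ← map_smul, ← hc', hc, sub_sub_cancel]

end
end

section
/- Assume n ≥ 1 and let λ ∈ K. Let M be a torsion-free λ-Euler graded D-module with M_0 = 0. Then M_{−(b_0 d_0 + b_1 d_1 + ⋯ + b_n d_n)} = 0 for all natural numbers b_0, …, b_n; that is, M_{−s} = 0 for every s ∈ 𝒜. -/
/-!
Context: `K` is a field of characteristic zero, `n ≥ 0`, and `d 0, …, d n` are
positive integers.  `A = K[x_0, …, x_n]` is the polynomial ring, graded with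
`x i` of weighted degree `d i`.  Inside `End_K(A)` we have the multiplication
operators `x i`, the partial derivatives `∂ i`, the Weyl algebra `D` generated
by them, and the Euler field `E = Σ_i d_i x_i ∂_i`.
-/

open MvPolynomial Finset

set_option linter.unusedSectionVars false
set_option synthInstance.maxHeartbeats 1000000
set_option maxHeartbeats 2000000

noncomputable section

variable (K : Type) [Field K] [CharZero K] (n : ℕ)

variable (d : Fin (n+1) → ℕ)

/-- The canonical commutation relation `∂_i x_i = x_i ∂_i + 1` in the Weyl algebra. -/
lemma dElt_mul_xElt (i : Fin (n+1)) :
    dElt K n i * xElt K n i = xElt K n i * dElt K n i + 1 := by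
  refine Subtype.ext (LinearMap.ext fun p => ?_)
  simp only [MulMemClass.coe_mul, AddMemClass.coe_add, OneMemClass.coe_one, xElt, dElt, xOp, dOp,
    Module.End.mul_apply, LinearMap.add_apply, Module.End.one_apply, LinearMap.mulLeft_apply,
    Derivation.coeFn_coe, Derivation.leibniz, pderiv_X_self, smul_eq_mul, mul_one]

/-- The variables commute in the Weyl algebra. -/
lemma xElt_commute (i j : Fin (n+1)) : Commute (xElt K n i) (xElt K n j) := by
  refine Subtype.ext (LinearMap.ext fun p => ?_)
  simp only [MulMemClass.coe_mul, xElt, xOp, Module.End.mul_apply, LinearMap.mulLeft_apply]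
  ring

section CommutationRelation

variable {K} {M : Type*} [AddCommGroup M] [Module K M]

/-- If `∂ x = x ∂ + 1` and `x v = 0`, then `x ∂^(e+1) v = -(e+1) ∂^e v`. -/
lemma apply_pow_succ_of_apply_eq_zero {x y : Module.End K M} (hyx : y * x = x * y + 1)
    {v : M} (hv : x v = 0) (e : ℕ) :
    x ((y ^ (e + 1)) v) = -((e + 1 : K) • (y ^ e) v) := by
  have hcomm (w : M) : x (y w) = y (x w) - w := by
    have := LinearMap.congr_fun hyx w
    simp only [Module.End.mul_apply, LinearMap.add_apply, Module.End.one_apply] at this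
    rw [this, add_sub_cancel_right]
  induction e with
  | zero => simp [hcomm, hv]
  | succ e ih =>
    rw [pow_succ', Module.End.mul_apply, hcomm, ih, map_neg, map_smul, ← Module.End.mul_apply,
      ← pow_succ']
    push_cast
    module

/-- If `∂ x = x ∂ + 1`, then every power of `∂` is injective on the kernel of `x`. -/
lemma eq_zero_of_pow_apply_eq_zero {x y : Module.End K M} (hyx : y * x = x * y + 1)
    {v : M} (hv : x v = 0) (e : ℕ) (he : (y ^ e) v = 0) : v = 0 := by
  induction e with
  | zero => simpa using he
  | succ e ih =>
    refine ih ?_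
    have h := apply_pow_succ_of_apply_eq_zero hyx hv e
    rw [he, map_zero, eq_comm, neg_eq_zero] at h
    exact (smul_eq_zero.mp h).resolve_left (Nat.cast_add_one_ne_zero e)

/-- Powers of an operator that shifts degrees by `a` shift degrees by multiples of `a`. -/
lemma pow_apply_mem_of_shift {Mgr : ℤ → Submodule K M} {f : Module.End K M} {a : ℤ}
    (hf : ∀ k, ∀ m ∈ Mgr k, f m ∈ Mgr (k + a)) (c : ℕ) {k : ℤ} {m : M} (hm : m ∈ Mgr k) :
    (f ^ c) m ∈ Mgr (k + c * a) := by
  induction c with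
  | zero => simpa using hm
  | succ c ih =>
    rw [pow_succ', Module.End.mul_apply]
    have h := hf _ _ ih
    rwa [show k + (c : ℤ) * a + a = k + ((c + 1 : ℕ) : ℤ) * a by push_cast; ring] at h

end CommutationRelation

/-- Assume `n ≥ 1` and let `λ ∈ K`.  Let `M` be a torsion-free `λ`-Euler
graded `D`-module with `M_0 = 0`.  Then `M_{−(b_0 d_0 + ⋯ + b_n d_n)} = 0` for all
natural numbers `b_0, …, b_n`; that is, `M_{−s} = 0` for every `s ∈ 𝒜`. -/
theorem stmt14 (hn : 1 ≤ n) (hd : ∀ i, 0 < d i) (t : K)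
    {M : Type} [AddCommGroup M] [Module K M]
    (ρ : Weyl K n →ₐ[K] Module.End K M)
    (Mgr : ℤ → Submodule K M)
    (hdirect : DirectSum.IsInternal Mgr)
    (hgx : ∀ (i : Fin (n+1)) (k : ℤ), ∀ m ∈ Mgr k, ρ (xElt K n i) m ∈ Mgr (k + d i))
    (hgd : ∀ (i : Fin (n+1)) (k : ℤ), ∀ m ∈ Mgr k, ρ (dElt K n i) m ∈ Mgr (k - d i))
    (hgE : ∀ (k : ℤ), ∀ m ∈ Mgr k, ρ (eulerElt K n d) m = (t + (k : K)) • m)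
    (htf : ∀ m : M, (∃ c : ℕ, ∀ i : Fin (n+1), (ρ (xElt K n i) ^ c) m = 0) → m = 0)
    (h0 : Mgr 0 = ⊥) :
    ∀ b : Fin (n+1) → ℕ, Mgr (-(∑ i, (b i : ℤ) * (d i : ℤ))) = ⊥ := by
  have hshift (b : Fin (n+1) → ℕ) (i : Fin (n+1)) (r : ℕ) :
      ∑ j, (Function.update b i r j : ℤ) * (d j : ℤ)
        = (∑ j, (b j : ℤ) * (d j : ℤ)) + ((r : ℤ) - b i) * d i := by
    rw [← Finset.add_sum_erase _ _ (Finset.mem_univ i),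
      ← Finset.add_sum_erase _ (fun j => (b j : ℤ) * (d j : ℤ)) (Finset.mem_univ i),
      Finset.sum_congr rfl fun j hj => by
        rw [Function.update_of_ne (Finset.ne_of_mem_erase hj)], Function.update_self]
    ring
  have hlt (b : Fin (n+1) → ℕ) (i : Fin (n+1)) (r : ℕ) (hr : r < b i) :
      ∑ j, Function.update b i r j < ∑ j, b j := by
    refine Finset.sum_lt_sum (fun j _ => ?_) ⟨i, Finset.mem_univ i, by simpa using hr⟩
    rcases eq_or_ne j i with rfl | hj
    · simpa using hr.le
    · simp [hj]
  intro b
  induction hN : ∑ j, b j using Nat.strong_induction_on generalizing b with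
  | _ N ih =>
  by_cases hb : ∀ i, b i = 0
  · simpa [hb] using h0
  push Not at hb
  obtain ⟨i, hi⟩ := hb
  replace hi : 0 < b i := Nat.pos_of_ne_zero hi
  rw [eq_bot_iff]
  intro m hm
  have hzero (r : ℕ) (hr : r < b i) (k : ℤ)
      (hk : k = -(∑ j, (b j : ℤ) * (d j : ℤ)) + ((b i : ℤ) - r) * d i)
      (v : M) (hv : v ∈ Mgr k) : v = 0 := by
    have h := ih _ (hN ▸ hlt b i r hr) (Function.update b i r) rfl
    rw [hshift] at h
    rw [show k = -((∑ j, (b j : ℤ) * (d j : ℤ)) + ((r : ℤ) - b i) * d i) by rw [hk]; ring,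
      h] at hv
    exact (Submodule.mem_bot K).mp hv
  have hxm : ρ (xElt K n i) m = 0 :=
    hzero (b i - 1) (by omega) _ (by rw [Nat.cast_sub hi]; push_cast; ring) _ (hgx i _ m hm)
  have hyx : ρ (dElt K n i) * ρ (xElt K n i) = ρ (xElt K n i) * ρ (dElt K n i) + 1 := by
    rw [← map_mul, dElt_mul_xElt, map_add, map_mul, map_one]
  refine (Submodule.mem_bot K).mpr (htf m ⟨b i * d i, fun j => ?_⟩)
  have hxv : ρ (xElt K n i) ((ρ (xElt K n j) ^ (b i * d i)) m) = 0 := by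
    have hc : Commute (ρ (xElt K n i)) (ρ (xElt K n j) ^ (b i * d i)) :=
      ((xElt_commute K n i j).map ρ).pow_right _
    rw [← Module.End.mul_apply, hc.eq, Module.End.mul_apply, hxm, map_zero]
  refine eq_zero_of_pow_apply_eq_zero hyx hxv (b i * (d j - 1)) ?_
  refine hzero 0 hi _ ?_ _ (pow_apply_mem_of_shift (a := -(d i : ℤ))
    (fun k v hv => by simpa only [sub_eq_add_neg] using hgd i k v hv) _
    (pow_apply_mem_of_shift (hgx j) _ hm))
  have hdj : 1 ≤ d j := hd j
  push_cast [hdj]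
  ring

end
end
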